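/- In the abstract VMS setup, assume additionally that C_I > 0 satisfies ‖I_H v‖ ≤ C_I ‖v‖ for all v ∈ V_h. Let F : V_h → ℝ be a linear functional, let u_h ∈ V_h be the unique solution of a(u_h, v) = F(v) for all v ∈ V_h, and let u_H ∈ V_H be the unique solution of the ideal Petrov–Galerkin problem a(u_H, w) = F(w) for all w ∈ W_H. Then the quasi-optimality estimate ‖u_h − u_H‖ ≤ (1 + C_I) ‖u_h − v_H‖ holds for every v_H ∈ V_H. -/

import Mathlib

/-- The multiscale test space `W_H := {w ∈ V_h : a v w = 0 for all v ∈ R}`. -/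
def testSpace {V : Type*} [NormedAddCommGroup V] [InnerProductSpace ℝ V]
    (a : V →ₗ[ℝ] V →ₗ[ℝ] ℝ) (R : Submodule ℝ V) : Submodule ℝ V where
  carrier := {w | ∀ v ∈ R, a v w = 0}
  add_mem' := by
    intro x y hx hy v hv
    simp [map_add, hx v hv, hy v hv]
  zero_mem' := by
    intro v hv
    simp
  smul_mem' := by
    intro c x hx v hv
    simp [hx v hv]

/-!
The corrector makes `V_h` the sum of `R_H = ker I_H` and `W_H`; since `a` is definite, every element
which `a` annihilates against `W_H` then lies in `R_H`. Galerkin orthogonality says that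
`u_h - u_H` is such an element, so `u_H = I_H u_h`. As `1 - I_H` vanishes on `V_H`, the error is
`u_h - u_H = (1 - I_H) (u_h - v_H)` for every `v_H ∈ V_H`.
-/

section Orthogonal

variable {R V : Type*} [CommRing R] [AddCommGroup V] [Module R V] {I₁ I₂ : R →+* R}
  {B : V →ₛₗ[I₁] V →ₛₗ[I₂] R} {S : Submodule R V}

theorem codisjoint_orthogonalBilin_of_forall_exists
    (h : ∀ v, ∃ c ∈ S, ∀ w ∈ S, B w c = B w v) : Codisjoint S (S.orthogonalBilin B) := by
  refine Submodule.codisjoint_iff_exists_add_eq.mpr fun v ↦ ?_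
  obtain ⟨c, hc, hBc⟩ := h v
  exact ⟨c, v - c, hc, fun w hw ↦ by rw [map_sub, hBc w hw, sub_self], add_sub_cancel c v⟩

theorem orthogonalBilin_flip_orthogonalBilin (hB : ∀ v, B v v = 0 → v = 0)
    (hS : Codisjoint S (S.orthogonalBilin B)) :
    (S.orthogonalBilin B).orthogonalBilin B.flip = S := by
  refine le_antisymm (fun e he ↦ ?_) fun v hv w hw ↦ hw v hv
  obtain ⟨r, w, hr, hw, rfl⟩ := Submodule.codisjoint_iff_exists_add_eq.mp hS e
  have hBw : B w w = 0 := by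
    calc B w w = B (r + w) w := by rw [map_add, LinearMap.add_apply, hw r hr, zero_add]
      _ = 0 := he w hw
  rwa [hB w hBw, add_zero]

theorem eq_apply_of_galerkin_orthogonality {P : V →ₗ[R] V} (hP : IsIdempotentElem P)
    (hB : ∀ v, B v v = 0 → v = 0)
    (hsplit : Codisjoint (LinearMap.ker P) ((LinearMap.ker P).orthogonalBilin B))
    {u u' : V} (hu' : u' ∈ LinearMap.range P)
    (horth : ∀ w ∈ (LinearMap.ker P).orthogonalBilin B, B (u - u') w = 0) :
    u' = P u := by
  have hmem : u - u' ∈ LinearMap.ker P := by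
    rw [← orthogonalBilin_flip_orthogonalBilin hB hsplit]
    exact horth
  rw [LinearMap.sub_mem_ker_iff, LinearMap.IsIdempotentElem.mem_range_iff hP |>.mp hu'] at hmem
  exact hmem.symm

end Orthogonal

theorem norm_sub_apply_le_of_mem_range {R V : Type*} [Ring R] [SeminormedAddCommGroup V]
    [Module R V] {P : V →ₗ[R] V} (hP : IsIdempotentElem P) {C : ℝ} (hC : ∀ v, ‖P v‖ ≤ C * ‖v‖)
    (u : V) {v : V} (hv : v ∈ LinearMap.range P) :
    ‖u - P u‖ ≤ (1 + C) * ‖u - v‖ := by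
  have hPv : P v = v := (LinearMap.IsIdempotentElem.mem_range_iff hP).mp hv
  calc ‖u - P u‖ = ‖(u - v) - P (u - v)‖ := by rw [map_sub, hPv, sub_sub_sub_cancel_right]
    _ ≤ ‖u - v‖ + ‖P (u - v)‖ := norm_sub_le _ _
    _ ≤ ‖u - v‖ + C * ‖u - v‖ := by gcongr; exact hC _
    _ = (1 + C) * ‖u - v‖ := by ring

theorem eq_zero_of_mul_norm_sq_nonpos {V : Type*} [NormedAddCommGroup V] {ε : ℝ} (hε : 0 < ε)
    {v : V} (hv : ε * ‖v‖ ^ 2 ≤ 0) : v = 0 := by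
  have hsq : ‖v‖ ^ 2 ≤ 0 := nonpos_of_mul_nonpos_right hv hε
  exact norm_eq_zero.mp (sq_nonpos_iff _ |>.mp hsq)

theorem testSpace_eq_orthogonalBilin {V : Type*} [NormedAddCommGroup V] [InnerProductSpace ℝ V]
    (a : V →ₗ[ℝ] V →ₗ[ℝ] ℝ) (R : Submodule ℝ V) : testSpace a R = R.orthogonalBilin a :=
  rfl

theorem ideal_method_quasiOptimality_general {R V : Type*} [CommRing R]
    [SeminormedAddCommGroup V] [Module R V] {I₁ I₂ : R →+* R} {B : V →ₛₗ[I₁] V →ₛₗ[I₂] R}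
    (hB : ∀ v, B v v = 0 → v = 0) {P : V →ₗ[R] V} (hP : IsIdempotentElem P)
    (hsplit : Codisjoint (LinearMap.ker P) ((LinearMap.ker P).orthogonalBilin B))
    {C : ℝ} (hC : ∀ v, ‖P v‖ ≤ C * ‖v‖) {F : V →ₛₗ[I₂] R} {u u' : V}
    (hu : ∀ v, B u v = F v) (hu'_mem : u' ∈ LinearMap.range P)
    (hu' : ∀ w ∈ (LinearMap.ker P).orthogonalBilin B, B u' w = F w)
    {v : V} (hv : v ∈ LinearMap.range P) :
    ‖u - u'‖ ≤ (1 + C) * ‖u - v‖ := by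
  have galerkin_orthogonality : ∀ w ∈ (LinearMap.ker P).orthogonalBilin B, B (u - u') w = 0 := by
    intro w hw
    rw [map_sub, LinearMap.sub_apply, hu, hu' w hw, sub_self]
  rw [eq_apply_of_galerkin_orthogonality hP hB hsplit hu'_mem galerkin_orthogonality]
  exact norm_sub_apply_le_of_mem_range hP hC u hv

/-- **Quasi-optimality of the ideal Petrov–Galerkin method.**
In the abstract VMS setup, assume moreover that `‖I_H v‖ ≤ C_I ‖v‖` for all `v ∈ V_h`.
Let `u_h` solve `a u_h v = F v` for all `v ∈ V_h` and let `u_H ∈ V_H` solve the ideal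
Petrov–Galerkin problem `a u_H w = F w` for all `w ∈ W_H`. Then
`‖u_h − u_H‖ ≤ (1 + C_I) ‖u_h − v_H‖` for every `v_H ∈ V_H`. -/
theorem ideal_method_quasiOptimality
    {V_h : Type*} [NormedAddCommGroup V_h] [InnerProductSpace ℝ V_h]
    [FiniteDimensional ℝ V_h]
    (a : V_h →ₗ[ℝ] V_h →ₗ[ℝ] ℝ)
    (ε : ℝ) (hε : 0 < ε) (hcoer : ∀ v : V_h, ε * ‖v‖ ^ 2 ≤ a v v)
    (I_H : V_h →ₗ[ℝ] V_h) (hproj : I_H ∘ₗ I_H = I_H)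
    (C : V_h → V_h)
    (hC_mem : ∀ v : V_h, C v ∈ LinearMap.ker I_H)
    (hC : ∀ v : V_h, ∀ w ∈ LinearMap.ker I_H, a w (C v) = a w v)
    (C_I : ℝ) (hCI : 0 < C_I) (hI_bound : ∀ v : V_h, ‖I_H v‖ ≤ C_I * ‖v‖)
    (F : V_h →ₗ[ℝ] ℝ)
    (u_h : V_h) (hu_h : ∀ v : V_h, a u_h v = F v)
    (u_H : V_h) (hu_H_mem : u_H ∈ LinearMap.range I_H)
    (hu_H : ∀ w ∈ testSpace a (LinearMap.ker I_H), a u_H w = F w) :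
    ∀ v_H ∈ LinearMap.range I_H, ‖u_h - u_H‖ ≤ (1 + C_I) * ‖u_h - v_H‖ := by
  have hdef : ∀ v, a v v = 0 → v = 0 := fun v hv ↦
    eq_zero_of_mul_norm_sq_nonpos hε ((hcoer v).trans_eq hv)
  have hsplit := codisjoint_orthogonalBilin_of_forall_exists fun v ↦ ⟨C v, hC_mem v, hC v⟩
  rw [testSpace_eq_orthogonalBilin] at hu_H
  exact fun _ ↦ ideal_method_quasiOptimality_general hdef hproj hsplit hI_bound hu_h hu_H_mem hu_H
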